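/- arXiv:hep-th/9312093 — 3 statements merged into one kernel-verified Lean document; each statement's English description precedes it below -/
import Mathlib

section
/- Let n ≥ 2, let Ω ⊆ ℂ be open, and let φ₁,…,φₙ be smooth real-valued functions on Ω with φ₁+⋯+φₙ = 0. Set H = diag(e^{φ₁},…,e^{φₙ}), θ = ℰ₊, and let θ* = H⁻¹θ†H be the H-adjoint of θ, where † is conjugate transpose. Then: (i) θ* = Σ_{i=1}^{n−1} e^{φᵢ−φᵢ₊₁} E_{i+1,i}; (ii) with B_z = ∂Φ + θ and B_{z̄} = θ*, the curvature satisfies ∂B_{z̄} − ∂̄B_z + [B_z, B_{z̄}] = −∂∂̄Φ + [θ, θ*]; (iii) the connection d + B_z dz + B_{z̄} dz̄ is flat if and only if Hitchin's equation F_H + [θ,θ*] = 0 holds, where F_H = −∂∂̄Φ is the curvature of the Chern connection of H, if and only if φ₁,…,φₙ satisfy the A_{n−1} Toda equations. Thus any solution of the A_{n−1} Toda equations gives a solution of Hitchin's self-duality equation for the Higgs pair (H, θ). -/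
open Complex Matrix

/-- Wirtinger derivative `∂f = ½(∂ₓf − i ∂_y f)`. -/
noncomputable def wd (f : ℂ → ℂ) (z : ℂ) : ℂ :=
  (1 / 2 : ℂ) * (fderiv ℝ f z 1 - Complex.I * fderiv ℝ f z Complex.I)

/-- Wirtinger derivative `∂̄f = ½(∂ₓf + i ∂_y f)`. -/
noncomputable def wdb (f : ℂ → ℂ) (z : ℂ) : ℂ :=
  (1 / 2 : ℂ) * (fderiv ℝ f z 1 + Complex.I * fderiv ℝ f z Complex.I)

/-- Entrywise Wirtinger derivative `∂A` of a matrix-valued function. -/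
noncomputable def mwd {n : ℕ} (A : ℂ → Matrix (Fin n) (Fin n) ℂ) (z : ℂ) :
    Matrix (Fin n) (Fin n) ℂ :=
  Matrix.of fun i j => wd (fun w => A w i j) z

/-- Entrywise Wirtinger derivative `∂̄A` of a matrix-valued function. -/
noncomputable def mwdb {n : ℕ} (A : ℂ → Matrix (Fin n) (Fin n) ℂ) (z : ℂ) :
    Matrix (Fin n) (Fin n) ℂ :=
  Matrix.of fun i j => wdb (fun w => A w i j) z

/-- The hermitean metric `H = diag(e^{φ₁},…,e^{φₙ})`. -/
noncomputable def Hm (n : ℕ) (φ : Fin n → ℂ → ℝ) (z : ℂ) : Matrix (Fin n) (Fin n) ℂ :=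
  Matrix.diagonal fun i => ((Real.exp (φ i z) : ℝ) : ℂ)

/-- The Higgs field `θ = ℰ₊ = Σ_{i=1}^{n−1} E_{i,i+1}`. -/
def thetaE (n : ℕ) : Matrix (Fin n) (Fin n) ℂ :=
  Matrix.of fun i j => if (j : ℕ) = (i : ℕ) + 1 then 1 else 0

/-- The `H`-adjoint `θ* = H⁻¹ θᴴ H` of the Higgs field. -/
noncomputable def thetaStar (n : ℕ) (φ : Fin n → ℂ → ℝ) (z : ℂ) : Matrix (Fin n) (Fin n) ℂ :=
  (Hm n φ z)⁻¹ * (thetaE n)ᴴ * Hm n φ z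

/-- The diagonal matrix `Φ = diag(φ₁,…,φₙ)` (with complex entries). -/
noncomputable def Phic (n : ℕ) (φ : Fin n → ℂ → ℝ) (z : ℂ) : Matrix (Fin n) (Fin n) ℂ :=
  Matrix.diagonal fun i => ((φ i z : ℝ) : ℂ)

/-- `B_z = ∂Φ + θ`. -/
noncomputable def Bz (n : ℕ) (φ : Fin n → ℂ → ℝ) (z : ℂ) : Matrix (Fin n) (Fin n) ℂ :=
  mwd (Phic n φ) z + thetaE n

/-- Right-hand side `e^{φᵢ−φᵢ₊₁} − e^{φᵢ₋₁−φᵢ}` of the `A_{n−1}` Toda equations. -/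
noncomputable def todaRHS (n : ℕ) (φ : Fin n → ℂ → ℝ) (i : Fin n) (z : ℂ) : ℂ :=
  (if h : (i : ℕ) + 1 < n then ((Real.exp (φ i z - φ ⟨(i : ℕ) + 1, h⟩ z) : ℝ) : ℂ) else 0) -
  (if 0 < (i : ℕ) then
      ((Real.exp (φ ⟨(i : ℕ) - 1, lt_of_le_of_lt (Nat.sub_le _ _) i.isLt⟩ z - φ i z) : ℝ) : ℂ)
    else 0)

theorem hasFDerivAt_wd_aux (f : ℂ → ℂ) (z : ℂ) (hf : ContDiffAt ℝ 2 f z) (v : ℂ) :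
    HasFDerivAt (fun w => fderiv ℝ f w v) ((fderiv ℝ (fderiv ℝ f) z).flip v) z := by
  have h : DifferentiableAt ℝ (fderiv ℝ f) z :=
    (hf.fderiv_right (m := 1) (by norm_num)).differentiableAt (by norm_num)
  exact h.hasFDerivAt.clm_apply (hasFDerivAt_const v z) |>.congr_fderiv (by ext; simp)

theorem wdb_wd_comm (f : ℂ → ℂ) (z : ℂ) (hf : ContDiffAt ℝ 2 f z) :
    wdb (fun w => wd f w) z = wd (fun w => wdb f w) z := by
  have h1 := hasFDerivAt_wd_aux f z hf 1
  have h2 := hasFDerivAt_wd_aux f z hf Complex.I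
  have hs : IsSymmSndFDerivAt ℝ f z := hf.isSymmSndFDerivAt (by simp)
  have e := hs 1 Complex.I
  have a := ((h1.sub (h2.const_mul Complex.I)).const_mul (1 / 2 : ℂ)).fderiv
  have b := ((h1.add (h2.const_mul Complex.I)).const_mul (1 / 2 : ℂ)).fderiv
  have a' : fderiv ℝ (fun w => wd f w) z = _ := a
  have b' : fderiv ℝ (fun w => wdb f w) z = _ := b
  rw [wdb, wd, a', b']
  simp [e]
  ring

theorem wd_const (c z : ℂ) : wd (fun _ => c) z = 0 := by simp [wd]

theorem wdb_const (c z : ℂ) : wdb (fun _ => c) z = 0 := by simp [wdb]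

theorem wdb_add_const (f : ℂ → ℂ) (c z : ℂ) : wdb (fun w => f w + c) z = wdb f z := by
  simp [wdb]

theorem wd_exp_sub (f g : ℂ → ℝ) (z : ℂ) (hf : DifferentiableAt ℝ f z)
    (hg : DifferentiableAt ℝ g z) :
    wd (fun w => ((Real.exp (f w - g w) : ℝ) : ℂ)) z =
      ((Real.exp (f z - g z) : ℝ) : ℂ) *
        (wd (fun w => ((f w : ℝ) : ℂ)) z - wd (fun w => ((g w : ℝ) : ℂ)) z) := by
  have h1 := (Complex.ofRealCLM.hasFDerivAt.comp z (hf.hasFDerivAt)).fderiv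
  have h2 := (Complex.ofRealCLM.hasFDerivAt.comp z (hg.hasFDerivAt)).fderiv
  have h3 := (Complex.ofRealCLM.hasFDerivAt.comp z
    ((hf.hasFDerivAt.sub hg.hasFDerivAt).exp)).fderiv
  have h1' : fderiv ℝ (fun w => ((f w : ℝ) : ℂ)) z = _ := h1
  have h2' : fderiv ℝ (fun w => ((g w : ℝ) : ℂ)) z = _ := h2
  have h3' : fderiv ℝ (fun w => ((Real.exp (f w - g w) : ℝ) : ℂ)) z = _ := h3
  rw [wd, wd, wd, h1', h2', h3']
  simp
  ring

theorem thetaStar_eq (n : ℕ) (φ : Fin n → ℂ → ℝ) (z : ℂ) :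
    thetaStar n φ z = Matrix.of fun (i j : Fin n) =>
      if (i : ℕ) = (j : ℕ) + 1 then ((Real.exp (φ j z - φ i z) : ℝ) : ℂ) else 0 := by
  have hinv : (Hm n φ z)⁻¹ = Matrix.diagonal fun i => ((Real.exp (-φ i z) : ℝ) : ℂ) := by
    apply Matrix.inv_eq_right_inv
    rw [Hm, Matrix.diagonal_mul_diagonal, ← Matrix.diagonal_one]
    congr 1
    funext i
    rw [← Complex.ofReal_mul, ← Real.exp_add]
    simp
  rw [thetaStar, hinv, Hm]
  ext i j
  rw [Matrix.mul_diagonal, Matrix.diagonal_mul]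
  simp only [Matrix.conjTranspose_apply, thetaE, Matrix.of_apply]
  split_ifs with h
  · rw [star_one, mul_one, ← Complex.ofReal_mul, ← Real.exp_add]
    congr 2
    ring
  · simp

theorem mwd_Phic (n : ℕ) (φ : Fin n → ℂ → ℝ) (z : ℂ) :
    mwd (Phic n φ) z = Matrix.diagonal fun i => wd (fun w => ((φ i w : ℝ) : ℂ)) z := by
  ext i j
  by_cases h : i = j
  · subst h; simp [mwd, Phic]
  · simp [mwd, Phic, h, wd_const]

theorem mwdb_Phic (n : ℕ) (φ : Fin n → ℂ → ℝ) (z : ℂ) :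
    mwdb (Phic n φ) z = Matrix.diagonal fun i => wdb (fun w => ((φ i w : ℝ) : ℂ)) z := by
  ext i j
  by_cases h : i = j
  · subst h; simp [mwdb, Phic]
  · simp [mwdb, Phic, h, wdb_const]

theorem mwd_mwdb_Phic (n : ℕ) (φ : Fin n → ℂ → ℝ) (z : ℂ) :
    mwd (fun w => mwdb (Phic n φ) w) z =
      Matrix.diagonal fun i => wd (fun w => wdb (fun v => ((φ i v : ℝ) : ℂ)) w) z := by
  simp only [mwdb_Phic]
  ext i j
  by_cases h : i = j
  · subst h; simp [mwd]
  · simp [mwd, h, wd_const]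

theorem mwdb_Bz (n : ℕ) (φ : Fin n → ℂ → ℝ) (z : ℂ) :
    mwdb (Bz n φ) z =
      Matrix.diagonal fun i => wdb (fun w => wd (fun v => ((φ i v : ℝ) : ℂ)) w) z := by
  ext i j
  simp only [mwdb, Bz, mwd_Phic, Matrix.of_apply, Matrix.add_apply]
  rw [wdb_add_const]
  by_cases h : i = j
  · subst h; simp
  · simp [h, wdb_const]

theorem comm_theta (n : ℕ) (φ : Fin n → ℂ → ℝ) (z : ℂ) :
    thetaE n * thetaStar n φ z - thetaStar n φ z * thetaE n =
      Matrix.diagonal fun i => todaRHS n φ i z := by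
  have h1 : thetaE n * thetaStar n φ z = Matrix.diagonal fun i : Fin n =>
      if h : (i : ℕ) + 1 < n then
        ((Real.exp (φ i z - φ ⟨(i : ℕ) + 1, h⟩ z) : ℝ) : ℂ) else 0 := by
    rw [thetaStar_eq]
    ext i k
    rw [Matrix.mul_apply]
    simp only [thetaE, Matrix.of_apply, ite_mul, one_mul, zero_mul]
    by_cases h : (i : ℕ) + 1 < n
    · rw [Finset.sum_eq_single (⟨(i : ℕ) + 1, h⟩ : Fin n)]
      · by_cases hik : i = k
        · subst hik; simp [h]
        · have : ¬ (i : ℕ) = k := fun e => hik (Fin.ext e)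
          simp [hik, this]
      · intro b _ hb
        rw [if_neg]
        intro e
        exact hb (Fin.ext e)
      · simp
    · rw [Finset.sum_eq_zero]
      · by_cases hik : i = k
        · subst hik; simp [h]
        · simp [hik]
      · intro b _
        rw [if_neg]
        have := b.isLt
        omega
  have h2 : thetaStar n φ z * thetaE n = Matrix.diagonal fun i : Fin n =>
      if 0 < (i : ℕ) then
      ((Real.exp (φ ⟨(i : ℕ) - 1, lt_of_le_of_lt (Nat.sub_le _ _) i.isLt⟩ z - φ i z) : ℝ) : ℂ)
      else 0 := by
    rw [thetaStar_eq]
    ext i k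
    rw [Matrix.mul_apply]
    simp only [thetaE, Matrix.of_apply, ite_mul, mul_ite, mul_one, mul_zero, zero_mul]
    by_cases h : 0 < (i : ℕ)
    · rw [Finset.sum_eq_single
        (⟨(i : ℕ) - 1, lt_of_le_of_lt (Nat.sub_le _ _) i.isLt⟩ : Fin n)]
      · have e1 : (i : ℕ) - 1 + 1 = i := by omega
        by_cases hik : i = k
        · subst hik
          rw [Matrix.diagonal_apply_eq, if_pos h]
          dsimp only
          rw [if_pos e1.symm, if_pos e1.symm]
        · have : ¬ (k : ℕ) = i := fun e => hik (Fin.ext e.symm)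
          rw [Matrix.diagonal_apply_ne _ hik]
          dsimp only
          rw [e1, if_neg this]
      · intro b _ hb
        have : ¬ (i : ℕ) = b + 1 := fun e => hb (Fin.ext (by simp [e]))
        simp [this]
      · simp
    · rw [Finset.sum_eq_zero]
      · by_cases hik : i = k
        · subst hik; rw [Matrix.diagonal_apply_eq, if_neg h]
        · simp [hik]
      · intro b _
        have : ¬ (i : ℕ) = b + 1 := by omega
        simp [this]
  rw [h1, h2, Matrix.diagonal_sub]
  rfl

theorem curvature_eq (n : ℕ) (Ω : Set ℂ) (hΩ : IsOpen Ω)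
    (φ : Fin n → ℂ → ℝ) (hφ : ∀ i, ContDiffOn ℝ (⊤ : ℕ∞) (φ i) Ω) (z : ℂ) (hz : z ∈ Ω) :
    mwd (thetaStar n φ) z - mwdb (Bz n φ) z +
        (Bz n φ z * thetaStar n φ z - thetaStar n φ z * Bz n φ z) =
      -(mwd (fun w => mwdb (Phic n φ) w) z) +
        (thetaE n * thetaStar n φ z - thetaStar n φ z * thetaE n) := by
  have hc : ∀ i, ContDiffAt ℝ 2 (φ i) z := fun i =>
    ((hφ i).contDiffAt (hΩ.mem_nhds hz)).of_le (WithTop.coe_le_coe.2 (le_top : (2 : ℕ∞) ≤ ⊤))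
  have hd : ∀ i, DifferentiableAt ℝ (φ i) z := fun i => (hc i).differentiableAt (by norm_num)
  have e1 : mwdb (Bz n φ) z = mwd (fun w => mwdb (Phic n φ) w) z := by
    rw [mwdb_Bz, mwd_mwdb_Phic]
    congr 1
    funext i
    exact wdb_wd_comm _ z (Complex.ofRealCLM.contDiff.contDiffAt.comp z (hc i))
  have e2 : mwd (thetaStar n φ) z +
      (mwd (Phic n φ) z * thetaStar n φ z - thetaStar n φ z * mwd (Phic n φ) z) = 0 := by
    rw [mwd_Phic]
    ext i j
    rw [Matrix.add_apply, Matrix.sub_apply, Matrix.diagonal_mul, Matrix.mul_diagonal]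
    simp only [mwd, thetaStar_eq, Matrix.of_apply, Matrix.zero_apply]
    split_ifs with h
    · rw [wd_exp_sub _ _ _ (hd j) (hd i)]
      ring
    · simp [wd_const]
  rw [e1, Bz, add_mul, mul_add]
  have : mwd (thetaStar n φ) z = -(mwd (Phic n φ) z * thetaStar n φ z
      - thetaStar n φ z * mwd (Phic n φ) z) := eq_neg_of_add_eq_zero_left e2
  rw [this]
  abel

/-- (i) `θ* = Σ e^{φᵢ−φᵢ₊₁} E_{i+1,i}`; (ii) the curvature of `d + B_z dz + B_{z̄} dz̄`
with `B_{z̄} = θ*` equals `−∂∂̄Φ + [θ,θ*]`; (iii) the connection is flat iff Hitchin's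
equation `F_H + [θ,θ*] = 0` holds (with `F_H = −∂∂̄Φ`) iff the Toda equations hold. -/
theorem toda_gives_hitchin (n : ℕ) (hn : 2 ≤ n) (Ω : Set ℂ) (hΩ : IsOpen Ω)
    (φ : Fin n → ℂ → ℝ) (hφ : ∀ i, ContDiffOn ℝ (⊤ : ℕ∞) (φ i) Ω)
    (hsum : ∀ z ∈ Ω, ∑ i, φ i z = 0) :
    (∀ z ∈ Ω,
        thetaStar n φ z =
          Matrix.of fun (i j : Fin n) =>
            if (i : ℕ) = (j : ℕ) + 1 then ((Real.exp (φ j z - φ i z) : ℝ) : ℂ) else 0) ∧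
    (∀ z ∈ Ω,
        mwd (thetaStar n φ) z - mwdb (Bz n φ) z +
            (Bz n φ z * thetaStar n φ z - thetaStar n φ z * Bz n φ z) =
          -(mwd (fun w => mwdb (Phic n φ) w) z) +
            (thetaE n * thetaStar n φ z - thetaStar n φ z * thetaE n)) ∧
    ((∀ z ∈ Ω,
        mwd (thetaStar n φ) z - mwdb (Bz n φ) z +
            (Bz n φ z * thetaStar n φ z - thetaStar n φ z * Bz n φ z) = 0) ↔
      (∀ z ∈ Ω,
        -(mwd (fun w => mwdb (Phic n φ) w) z) +
            (thetaE n * thetaStar n φ z - thetaStar n φ z * thetaE n) = 0)) ∧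
    ((∀ z ∈ Ω,
        -(mwd (fun w => mwdb (Phic n φ) w) z) +
            (thetaE n * thetaStar n φ z - thetaStar n φ z * thetaE n) = 0) ↔
      (∀ z ∈ Ω, ∀ i : Fin n,
        wd (fun w => wdb (fun v => ((φ i v : ℝ) : ℂ)) w) z = todaRHS n φ i z)) := by
  have hcurv := curvature_eq n Ω hΩ φ hφ
  refine ⟨fun z _ => thetaStar_eq n φ z, hcurv, ?_, ?_⟩
  · exact forall₂_congr fun z hz => by rw [hcurv z hz]
  · refine forall₂_congr fun z hz => ?_
    rw [comm_theta, mwd_mwdb_Phic, neg_add_eq_zero, Matrix.diagonal_eq_diagonal_iff]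
end

section
/- Let n ≥ 2, let Ω ⊆ ℂ be open, and let φ₁,…,φₙ be smooth real-valued functions on Ω with φ₁+⋯+φₙ = 0. Let ω_z = ∂Φ + ℰ₊ and ω_{z̄} = Σ_{i=1}^{n−1} e^{φᵢ−φᵢ₊₁} E_{i+1,i} be the Toda connection forms, let H = diag(e^{φ₁},…,e^{φₙ}), and set M = I·H. Then ∂M = M·ω_z + ω_{z̄}†·M and ∂̄M = M·ω_{z̄} + ω_z†·M, where † is conjugate transpose. (These identities express that the indefinite hermitean form ⟨u,v⟩ = v†Mu of signature (⌈n/2⌉, ⌊n/2⌋) is flat with respect to the Toda connection D = d + ω_z dz + ω_{z̄} dz̄, i.e. d⟨u,v⟩ = ⟨Du,v⟩ + ⟨u,Dv⟩.) -/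
open Complex Matrix

/-- Toda connection form `ω_z = ∂Φ + ℰ₊`. -/
noncomputable def omegaZ (n : ℕ) (φ : Fin n → ℂ → ℝ) (z : ℂ) : Matrix (Fin n) (Fin n) ℂ :=
  Matrix.of fun (i j : Fin n) =>
    if i = j then wd (fun w => ((φ i w : ℝ) : ℂ)) z
    else if (j : ℕ) = (i : ℕ) + 1 then 1
    else 0

/-- Toda connection form `ω_{z̄} = Σ_{i=1}^{n−1} e^{φᵢ−φᵢ₊₁} E_{i+1,i}`. -/
noncomputable def omegaZb (n : ℕ) (φ : Fin n → ℂ → ℝ) (z : ℂ) : Matrix (Fin n) (Fin n) ℂ :=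
  Matrix.of fun (i j : Fin n) =>
    if (i : ℕ) = (j : ℕ) + 1 then ((Real.exp (φ j z - φ i z) : ℝ) : ℂ) else 0

/-- The diagonal matrix `I = diag(1, −1, 1, …, (−1)^{n+1})`. -/
def Imat (n : ℕ) : Matrix (Fin n) (Fin n) ℂ :=
  Matrix.diagonal fun i : Fin n => (-1 : ℂ) ^ (i : ℕ)

/-- `M = I·H` with `H = diag(e^{φ₁},…,e^{φₙ})`. -/
noncomputable def Mform (n : ℕ) (φ : Fin n → ℂ → ℝ) (z : ℂ) : Matrix (Fin n) (Fin n) ℂ :=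
  Imat n * Matrix.diagonal fun i => ((Real.exp (φ i z) : ℝ) : ℂ)

theorem fderiv_exp_aux {f : ℂ → ℝ} {z : ℂ} (hf : DifferentiableAt ℝ f z) (c : ℂ) (v : ℂ) :
    fderiv ℝ (fun w => c * ((Real.exp (f w) : ℝ) : ℂ)) z v
      = c * ((Real.exp (f z) : ℝ) : ℂ) * ((fderiv ℝ f z v : ℝ) : ℂ) := by
  have h := ((Complex.ofRealCLM.hasFDerivAt.comp z hf.hasFDerivAt.exp).const_mul c)
  have h2 : HasFDerivAt (fun w => c * ((Real.exp (f w) : ℝ) : ℂ)) _ z := h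
  rw [h2.fderiv]
  simp
  ring

theorem fderiv_ofReal_aux {f : ℂ → ℝ} {z : ℂ} (hf : DifferentiableAt ℝ f z) (v : ℂ) :
    fderiv ℝ (fun w => ((f w : ℝ) : ℂ)) z v = ((fderiv ℝ f z v : ℝ) : ℂ) := by
  have h2 : HasFDerivAt (fun w => ((f w : ℝ) : ℂ)) _ z :=
    Complex.ofRealCLM.hasFDerivAt.comp z hf.hasFDerivAt
  rw [h2.fderiv]
  simp

theorem Mform_eq (n : ℕ) (φ : Fin n → ℂ → ℝ) (z : ℂ) :
    Mform n φ z
      = Matrix.diagonal fun i : Fin n => (-1 : ℂ) ^ (i : ℕ) * ((Real.exp (φ i z) : ℝ) : ℂ) := by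
  simp [Mform, Imat]

theorem exp_aux (a b : ℝ) : ((Real.exp (a - b) : ℝ) : ℂ) * ((Real.exp b : ℝ) : ℂ)
    = ((Real.exp a : ℝ) : ℂ) := by
  rw [← Complex.ofReal_mul, ← Real.exp_add, sub_add_cancel]

/-- `∂M = M ω_z + ω_{z̄}† M` and `∂̄M = M ω_{z̄} + ω_z† M`: the indefinite hermitean form of
matrix `M = I·H` is flat with respect to the Toda connection `D = d + ω_z dz + ω_{z̄} dz̄`. -/
theorem indefinite_form_flat_for_toda (n : ℕ) (hn : 2 ≤ n) (Ω : Set ℂ) (hΩ : IsOpen Ω)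
    (φ : Fin n → ℂ → ℝ) (hφ : ∀ i, ContDiffOn ℝ (⊤ : ℕ∞) (φ i) Ω)
    (hsum : ∀ z ∈ Ω, ∑ i, φ i z = 0) :
    ∀ z ∈ Ω,
      mwd (Mform n φ) z =
        Mform n φ z * omegaZ n φ z + (omegaZb n φ z)ᴴ * Mform n φ z ∧
      mwdb (Mform n φ) z =
        Mform n φ z * omegaZb n φ z + (omegaZ n φ z)ᴴ * Mform n φ z := by
  intro z hz
  have hd : ∀ i, DifferentiableAt ℝ (φ i) z := fun i =>
    ((hφ i).contDiffAt (hΩ.mem_nhds hz)).differentiableAt (by simp)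
  constructor
  · ext i j
    rw [Matrix.add_apply, Mform_eq, Matrix.diagonal_mul, Matrix.mul_diagonal,
      Matrix.conjTranspose_apply]
    simp only [mwd, Matrix.of_apply, Mform_eq, omegaZ, omegaZb]
    by_cases hij : i = j
    · subst hij
      simp only [Matrix.diagonal_apply_eq, wd, fderiv_exp_aux (hd i), fderiv_ofReal_aux (hd i)]
      simp
      ring
    · simp only [Matrix.diagonal_apply_ne _ hij, wd, if_neg hij]
      by_cases hj : (j : ℕ) = (i : ℕ) + 1
      · have e := exp_aux (φ i z) (φ j z)
        simp only [hj, if_true, RCLike.star_def, Complex.conj_ofReal, pow_succ]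
        simp only [fderiv_fun_const]
        simp only [Pi.zero_apply, ContinuousLinearMap.zero_apply]
        linear_combination (-1 : ℂ) ^ (i : ℕ) * e
      · simp [hj]
  · ext i j
    rw [Matrix.add_apply, Mform_eq, Matrix.diagonal_mul, Matrix.mul_diagonal,
      Matrix.conjTranspose_apply]
    simp only [mwdb, Matrix.of_apply, Mform_eq, omegaZ, omegaZb]
    by_cases hij : i = j
    · subst hij
      simp only [Matrix.diagonal_apply_eq, wd, wdb, fderiv_exp_aux (hd i),
        fderiv_ofReal_aux (hd i)]
      simp
      ring
    · simp only [Matrix.diagonal_apply_ne _ hij, wdb, if_neg (Ne.symm hij)]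
      by_cases hj : (i : ℕ) = (j : ℕ) + 1
      · have e := exp_aux (φ j z) (φ i z)
        simp only [hj, if_true, pow_succ, star_one]
        simp only [fderiv_fun_const]
        simp only [Pi.zero_apply, ContinuousLinearMap.zero_apply]
        linear_combination (-1 : ℂ) ^ (j : ℕ) * e
      · simp [hj]
end

section
/- Let Ω ⊆ ℂ be open and let φ₁, φ₂, φ₃ be smooth real-valued functions on Ω with φ₁+φ₂+φ₃ = 0 satisfying the sl(3) Toda equations: ∂∂̄φ₁ = e^{φ₁−φ₂}, ∂∂̄φ₂ = e^{φ₂−φ₃} − e^{φ₁−φ₂}, ∂∂̄φ₃ = −e^{φ₂−φ₃}. Set f = ∂²φ₁ + ∂φ₁·∂φ₂, and define the W₃-generators w₂ = (∂φ₃)² + ∂²φ₃ − ∂²φ₁ − ∂φ₁·∂φ₂ and w₃ = ∂f + f·∂φ₃. Then w₂ and w₃ are holomorphic on Ω: ∂̄w₂ = 0 and ∂̄w₃ = 0. -/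
open Complex

/-- `∂φ` for a real-valued function `φ`. -/
noncomputable def pd (φ : ℂ → ℝ) : ℂ → ℂ :=
  fun z => wd (fun w => ((φ w : ℝ) : ℂ)) z

/-- `∂̄φ` for a real-valued function `φ`. -/
noncomputable def pdb (φ : ℂ → ℝ) : ℂ → ℂ :=
  fun z => wdb (fun w => ((φ w : ℝ) : ℂ)) z

/-- `f = ∂²φ₁ + ∂φ₁·∂φ₂`. -/
noncomputable def fsl3 (φ1 φ2 : ℂ → ℝ) : ℂ → ℂ :=
  fun z => wd (pd φ1) z + pd φ1 z * pd φ2 z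

/-- `w₂ = (∂φ₃)² + ∂²φ₃ − ∂²φ₁ − ∂φ₁·∂φ₂`. -/
noncomputable def w2sl3 (φ1 φ2 φ3 : ℂ → ℝ) : ℂ → ℂ :=
  fun z => (pd φ3 z) ^ 2 + wd (pd φ3) z - wd (pd φ1) z - pd φ1 z * pd φ2 z

/-- `w₃ = ∂f + f·∂φ₃`. -/
noncomputable def w3sl3 (φ1 φ2 φ3 : ℂ → ℝ) : ℂ → ℂ :=
  fun z => wd (fsl3 φ1 φ2) z + fsl3 φ1 φ2 z * pd φ3 z

/-- Common form of both Wirtinger derivatives. -/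
noncomputable def wD (c : ℂ) (f : ℂ → ℂ) (z : ℂ) : ℂ :=
  (1 / 2 : ℂ) * (fderiv ℝ f z 1 + c * fderiv ℝ f z Complex.I)

lemma wd_eq (f : ℂ → ℂ) : wd f = wD (-Complex.I) f := by
  funext z; simp only [wd, wD]; ring

lemma wdb_eq (f : ℂ → ℂ) : wdb f = wD Complex.I f := rfl

lemma wD_smooth {Ω : Set ℂ} (hΩ : IsOpen Ω) (c : ℂ) {f : ℂ → ℂ}
    (hf : ContDiffOn ℝ (⊤ : ℕ∞) f Ω) : ContDiffOn ℝ (⊤ : ℕ∞) (wD c f) Ω := by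
  have h : ContDiffOn ℝ (⊤ : ℕ∞) (fderiv ℝ f) Ω := hf.fderiv_of_isOpen hΩ (by simp)
  unfold wD
  exact contDiffOn_const.mul ((h.clm_apply contDiffOn_const).add
    (contDiffOn_const.mul (h.clm_apply contDiffOn_const)))

lemma smooth_diff {Ω : Set ℂ} (hΩ : IsOpen Ω) {f : ℂ → ℂ}
    (hf : ContDiffOn ℝ (⊤ : ℕ∞) f Ω) {z : ℂ} (hz : z ∈ Ω) : DifferentiableAt ℝ f z :=
  (hf.differentiableOn (by simp)).differentiableAt (hΩ.mem_nhds hz)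

lemma wD_congr {Ω : Set ℂ} (hΩ : IsOpen Ω) (c : ℂ) {f g : ℂ → ℂ}
    (h : ∀ z ∈ Ω, f z = g z) {z : ℂ} (hz : z ∈ Ω) : wD c f z = wD c g z := by
  have : f =ᶠ[nhds z] g := Filter.eventuallyEq_of_mem (hΩ.mem_nhds hz) h
  simp only [wD, this.fderiv_eq]

lemma wD_add (c : ℂ) {f g : ℂ → ℂ} {z : ℂ} (hf : DifferentiableAt ℝ f z)
    (hg : DifferentiableAt ℝ g z) : wD c (fun w => f w + g w) z = wD c f z + wD c g z := by
  simp only [wD, fderiv_fun_add hf hg, _root_.add_apply]; ring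

lemma wD_sub (c : ℂ) {f g : ℂ → ℂ} {z : ℂ} (hf : DifferentiableAt ℝ f z)
    (hg : DifferentiableAt ℝ g z) : wD c (fun w => f w - g w) z = wD c f z - wD c g z := by
  simp only [wD, fderiv_fun_sub hf hg, _root_.sub_apply]; ring

lemma wD_neg (c : ℂ) (f : ℂ → ℂ) (z : ℂ) : wD c (fun w => -f w) z = -wD c f z := by
  simp only [wD, fderiv_fun_neg, _root_.neg_apply]; ring

lemma wD_mul (c : ℂ) {f g : ℂ → ℂ} {z : ℂ} (hf : DifferentiableAt ℝ f z)
    (hg : DifferentiableAt ℝ g z) :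
    wD c (fun w => f w * g w) z = wD c f z * g z + f z * wD c g z := by
  simp only [wD, fderiv_fun_mul hf hg, _root_.add_apply,
    _root_.smul_apply, smul_eq_mul]; ring

lemma wD_exp (c : ℂ) {f : ℂ → ℂ} {z : ℂ} (hf : DifferentiableAt ℝ f z) :
    wD c (fun w => Complex.exp (f w)) z = Complex.exp (f z) * wD c f z := by
  have h := (hf.hasFDerivAt.cexp).fderiv
  simp only [wD, h, _root_.smul_apply, smul_eq_mul]; ring

lemma wD_comm {Ω : Set ℂ} (hΩ : IsOpen Ω) (c d : ℂ) {f : ℂ → ℂ}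
    (hf : ContDiffOn ℝ (⊤ : ℕ∞) f Ω) {z : ℂ} (hz : z ∈ Ω) :
    wD c (wD d f) z = wD d (wD c f) z := by
  have h : ContDiffOn ℝ (⊤ : ℕ∞) (fderiv ℝ f) Ω := hf.fderiv_of_isOpen hΩ (by simp)
  have hd : DifferentiableAt ℝ (fderiv ℝ f) z :=
    (h.differentiableOn (by simp)).differentiableAt (hΩ.mem_nhds hz)
  have hsym : IsSymmSndFDerivAt ℝ f z :=
    (hf.contDiffAt (hΩ.mem_nhds hz)).isSymmSndFDerivAt (by
      simp only [minSmoothness_of_isRCLikeNormedField]; exact WithTop.coe_le_coe.2 (le_top : (2 : ℕ∞) ≤ ⊤))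
  have hs := hsym 1 Complex.I
  have key : ∀ e v : ℂ, fderiv ℝ (wD e f) z v = (1 / 2 : ℂ) *
      (fderiv ℝ (fderiv ℝ f) z v 1 + e * fderiv ℝ (fderiv ℝ f) z v Complex.I) := by
    intro e v
    have a1 : ∀ u : ℂ, HasFDerivAt (fun w => fderiv ℝ f w u)
        ((fderiv ℝ (fderiv ℝ f) z).flip u) z := by
      intro u
      simpa using hd.hasFDerivAt.clm_apply (hasFDerivAt_const u z)
    have := (((a1 1).add ((a1 Complex.I).const_mul e)).const_mul (1 / 2 : ℂ)).fderiv
    have h2 : fderiv ℝ (wD e f) z = _ := this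
    rw [h2]
    simp
    ring
  simp only [wD, key] at *
  rw [hs]; ring

/-- For a solution of the `sl(3)` Toda equations, the `W₃`-generators `w₂` and `w₃` are
holomorphic: `∂̄w₂ = 0` and `∂̄w₃ = 0` on `Ω`. -/
theorem sl3_W_generators_holomorphic (Ω : Set ℂ) (hΩ : IsOpen Ω)
    (φ1 φ2 φ3 : ℂ → ℝ)
    (h1 : ContDiffOn ℝ (⊤ : ℕ∞) φ1 Ω) (h2 : ContDiffOn ℝ (⊤ : ℕ∞) φ2 Ω) (h3 : ContDiffOn ℝ (⊤ : ℕ∞) φ3 Ω)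
    (hsum : ∀ z ∈ Ω, φ1 z + φ2 z + φ3 z = 0)
    (t1 : ∀ z ∈ Ω, wd (pdb φ1) z = ((Real.exp (φ1 z - φ2 z) : ℝ) : ℂ))
    (t2 : ∀ z ∈ Ω, wd (pdb φ2) z =
      ((Real.exp (φ2 z - φ3 z) : ℝ) : ℂ) - ((Real.exp (φ1 z - φ2 z) : ℝ) : ℂ))
    (t3 : ∀ z ∈ Ω, wd (pdb φ3) z = -((Real.exp (φ2 z - φ3 z) : ℝ) : ℂ)) :
    ∀ z ∈ Ω, wdb (w2sl3 φ1 φ2 φ3) z = 0 ∧ wdb (w3sl3 φ1 φ2 φ3) z = 0 := by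
  have ofR : ∀ {φ : ℂ → ℝ}, ContDiffOn ℝ (⊤ : ℕ∞) φ Ω →
      ContDiffOn ℝ (⊤ : ℕ∞) (fun w => ((φ w : ℝ) : ℂ)) Ω := fun h =>
    Complex.ofRealCLM.contDiff.comp_contDiffOn h
  have g1 := ofR h1
  have g2 := ofR h2
  have g3 := ofR h3
  have epd : ∀ φ : ℂ → ℝ, pd φ = wD (-Complex.I) (fun w => ((φ w : ℝ) : ℂ)) := by
    intro φ; rw [← wd_eq]; rfl
  have epdb : ∀ φ : ℂ → ℝ, pdb φ = wD Complex.I (fun w => ((φ w : ℝ) : ℂ)) := fun φ => rfl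
  have p1 : ContDiffOn ℝ (⊤ : ℕ∞) (pd φ1) Ω := epd φ1 ▸ wD_smooth hΩ _ g1
  have p2 : ContDiffOn ℝ (⊤ : ℕ∞) (pd φ2) Ω := epd φ2 ▸ wD_smooth hΩ _ g2
  have p3 : ContDiffOn ℝ (⊤ : ℕ∞) (pd φ3) Ω := epd φ3 ▸ wD_smooth hΩ _ g3
  have q1 := wD_smooth hΩ (-Complex.I) p1
  have q3 := wD_smooth hΩ (-Complex.I) p3
  set A : ℂ → ℂ := fun z => Complex.exp ((φ1 z : ℂ) - (φ2 z : ℂ)) with hA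
  set B : ℂ → ℂ := fun z => Complex.exp ((φ2 z : ℂ) - (φ3 z : ℂ)) with hB
  have sB : ContDiffOn ℝ (⊤ : ℕ∞) B Ω := (g2.sub g3).cexp
  have sA : ContDiffOn ℝ (⊤ : ℕ∞) A Ω := (g1.sub g2).cexp
  have b1 : ∀ z ∈ Ω, wD Complex.I (pd φ1) z = A z := by
    intro z hz
    rw [epd, wD_comm hΩ _ _ g1 hz, ← epdb, ← wd_eq, t1 z hz]; simp [hA]
  have b2 : ∀ z ∈ Ω, wD Complex.I (pd φ2) z = B z - A z := by
    intro z hz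
    rw [epd, wD_comm hΩ _ _ g2 hz, ← epdb, ← wd_eq, t2 z hz]; simp [hA, hB]
  have b3 : ∀ z ∈ Ω, wD Complex.I (pd φ3) z = -B z := by
    intro z hz
    rw [epd, wD_comm hΩ _ _ g3 hz, ← epdb, ← wd_eq, t3 z hz]; simp [hB]
  have dA : ∀ z ∈ Ω, wD (-Complex.I) A z = A z * (pd φ1 z - pd φ2 z) := by
    intro z hz
    rw [hA, wD_exp _ (smooth_diff hΩ (g1.sub g2) hz),
      wD_sub _ (smooth_diff hΩ g1 hz) (smooth_diff hΩ g2 hz), epd, epd]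
  have dB : ∀ z ∈ Ω, wD (-Complex.I) B z = B z * (pd φ2 z - pd φ3 z) := by
    intro z hz
    rw [hB, wD_exp _ (smooth_diff hΩ (g2.sub g3) hz),
      wD_sub _ (smooth_diff hΩ g2 hz) (smooth_diff hΩ g3 hz), epd, epd]
  have c1 : ∀ z ∈ Ω, wD Complex.I (wD (-Complex.I) (pd φ1)) z
      = A z * (pd φ1 z - pd φ2 z) := by
    intro z hz
    rw [wD_comm hΩ _ _ p1 hz, wD_congr hΩ _ b1 hz, dA z hz]
  have c3 : ∀ z ∈ Ω, wD Complex.I (wD (-Complex.I) (pd φ3)) z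
      = -(B z * (pd φ2 z - pd φ3 z)) := by
    intro z hz
    rw [wD_comm hΩ _ _ p3 hz, wD_congr hΩ _ b3 hz, wD_neg, dB z hz]
  have psum : ∀ z ∈ Ω, pd φ1 z + pd φ2 z + pd φ3 z = 0 := by
    intro z hz
    rw [epd, epd, epd, ← wD_add _ (smooth_diff hΩ g1 hz) (smooth_diff hΩ g2 hz),
      ← wD_add _ (smooth_diff hΩ (g1.add g2) hz) (smooth_diff hΩ g3 hz),
      wD_congr hΩ (g := fun _ => 0) _ (fun w hw => by exact_mod_cast hsum w hw) hz]
    simp [wD]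
  have ef : fsl3 φ1 φ2 = fun z => wD (-Complex.I) (pd φ1) z + pd φ1 z * pd φ2 z := by
    funext z; simp only [fsl3, wd_eq]
  have sf : ContDiffOn ℝ (⊤ : ℕ∞) (fsl3 φ1 φ2) Ω := ef ▸ q1.add (p1.mul p2)
  have df : ∀ z ∈ Ω, wD Complex.I (fsl3 φ1 φ2) z = pd φ1 z * B z := by
    intro z hz
    rw [ef, wD_add _ (smooth_diff hΩ q1 hz) (smooth_diff hΩ (p1.mul p2) hz),
      wD_mul _ (smooth_diff hΩ p1 hz) (smooth_diff hΩ p2 hz), c1 z hz, b1 z hz, b2 z hz]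
    ring
  intro z hz
  have d1 := smooth_diff hΩ p1 hz
  have d3 := smooth_diff hΩ p3 hz
  constructor
  · have e2 : w2sl3 φ1 φ2 φ3 = fun z => (pd φ3 z * pd φ3 z + wD (-Complex.I) (pd φ3) z)
        - fsl3 φ1 φ2 z := by
      funext z; simp only [w2sl3, fsl3, wd_eq]; ring
    rw [wdb_eq, e2, wD_sub _ (smooth_diff hΩ ((p3.mul p3).add q3) hz) (smooth_diff hΩ sf hz),
      wD_add _ (smooth_diff hΩ (p3.mul p3) hz) (smooth_diff hΩ q3 hz), wD_mul _ d3 d3,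
      b3 z hz, c3 z hz, df z hz]
    linear_combination (-B z) * psum z hz
  · have e3 : w3sl3 φ1 φ2 φ3 = fun z => wD (-Complex.I) (fsl3 φ1 φ2) z
        + fsl3 φ1 φ2 z * pd φ3 z := by
      funext z; simp only [w3sl3, wd_eq]
    rw [wdb_eq, e3, wD_add _ (smooth_diff hΩ (wD_smooth hΩ _ sf) hz)
        (smooth_diff hΩ (sf.mul p3) hz),
      wD_mul _ (smooth_diff hΩ sf hz) d3, wD_comm hΩ _ _ sf hz, wD_congr hΩ _ df hz,
      wD_mul _ d1 (smooth_diff hΩ sB hz), dB z hz, df z hz, b3 z hz, ef]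
    ring
end
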